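/- arXiv:1808.06313 — 5 statements merged into one kernel-verified Lean document; each statement's English description precedes it below -/
import Mathlib

section
/- Fix an integer r ≥ 1, and let D be the ℝ-derivation on the polynomial ring ℝ[X] determined by D(X) = X^{r+1} (corresponding to the context-free grammar G = {a → a^{r+1}}). Then for all natural numbers m ≥ 1 and n ≥ 0, D^n(X^m) = (∏_{j=0}^{n-1} (m + j·r)) · X^{m + n·r}. -/
open Polynomial Finset

/-- For the derivation on `ℝ[X]` with `D(X) = X^{r+1}` (grammar `{a → a^{r+1}}`),
`D^n(X^m) = (∏_{j=0}^{n-1} (m + j r)) · X^{m + n r}`. -/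
theorem iterate_derivation_pow_multifactorial
    (r : ℕ) (hr : 1 ≤ r)
    (D : Derivation ℝ (Polynomial ℝ) (Polynomial ℝ))
    (hD : D (X : Polynomial ℝ) = X ^ (r + 1))
    (m n : ℕ) (hm : 1 ≤ m) :
    (⇑D)^[n] ((X : Polynomial ℝ) ^ m) =
      ((∏ j ∈ range n, (m + j * r) : ℕ) : Polynomial ℝ) * X ^ (m + n * r) := by
  induction n with
  | zero => simp
  | succ n ih =>
    have hexp : m + n * r - 1 + (r + 1) = m + (n + 1) * r := by
      rw [add_one_mul]
      omega
    rw [Function.iterate_succ_apply', ih, Derivation.leibniz, Derivation.map_natCast,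
      Derivation.leibniz_pow, hD, smul_zero, add_zero, smul_eq_mul, smul_eq_mul, ← pow_add, hexp,
      nsmul_eq_mul, prod_range_succ, Nat.cast_mul, mul_assoc]
end

section
/- For every natural number n, the double factorial identity (2n)!! = ∑_{k=0}^{n} C(n,k) · (2(n−k)−1)!! · (2k−1)!! holds, with the convention (−1)!! = 1 (equivalently, in ℕ with truncated subtraction, (2·0−1)!! = 0!! = 1). -/
open Finset Nat

/-- The recurrence `(2k+1)!! = (2k+1) (2k-1)!!`, with truncated subtraction at `k = 0`. -/
theorem doubleFactorial_two_mul_succ_sub_one (k : ℕ) :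
    (2 * (k + 1) - 1)‼ = (2 * k + 1) * (2 * k - 1)‼ :=
  doubleFactorial_add_one (2 * k)

/-- Double factorial identity:
`(2n)!! = ∑_{k=0}^n C(n,k) (2(n−k)−1)!! (2k−1)!!`. -/
theorem doubleFactorial_identity (n : ℕ) :
    (2 * n)‼ = ∑ k ∈ range (n + 1), n.choose k * (2 * (n - k) - 1)‼ * (2 * k - 1)‼ := by
  induction n with
  | zero => simp
  | succ n ih =>
    have pascal := sum_choose_succ_mul (R := ℕ)
      (fun i j => (2 * j - 1)‼ * (2 * i - 1)‼) n
    simp only [Nat.cast_id, ← mul_assoc] at pascal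
    rw [pascal, ← sum_add_distrib, Nat.mul_succ, doubleFactorial_add_two, ih, mul_sum]
    refine sum_congr rfl fun k hk => ?_
    obtain ⟨m, rfl⟩ := Nat.exists_eq_add_of_le (mem_range_succ_iff.mp hk)
    rw [Nat.add_sub_cancel_left, add_assoc k m 1, Nat.add_sub_cancel_left,
      doubleFactorial_two_mul_succ_sub_one, doubleFactorial_two_mul_succ_sub_one]
    ring
end

section
/- Fix an integer r ≥ 1. Let a = X₀ and b = X₁ be the indeterminates of ℝ[a,b], let D₁ be the ℝ-derivation with D₁(a) = a, D₁(b) = b, and let D₂ be the ℝ-derivation with D₂(a) = a^r b, D₂(b) = a^{r−1} b². Define D₁₂ = D₁ ∘ D₂ (first apply D₂, then D₁). Then for all n ≥ 0, the n-th iterate satisfies D₁₂^n(a) = (∏_{j=0}^{n} (j·r + 1)) · (∏_{j=0}^{n−1} (j·r + 1)) · a^{n(r−1)+1} · b^n. (In multifactorial notation, the coefficient is (nr+1)!_r · ((n−1)r+1)!_r and the exponent of a is nr−(n−1).) -/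
open MvPolynomial Finset

/-- A derivation that multiplies both `x` and `y` by `c` multiplies `x ^ p * y ^ q` by
`(p + q) * c`. -/
theorem Derivation.map_pow_mul_pow_of_eq_mul {R A : Type*} [CommSemiring R] [CommSemiring A]
    [Algebra R A] (D : Derivation R A A) {x y c : A} (hx : D x = c * x) (hy : D y = c * y)
    (p q : ℕ) : D (x ^ p * y ^ q) = ((p + q : ℕ) : A) * c * (x ^ p * y ^ q) := by
  have map_pow_of_eq_mul {z : A} (hz : D z = c * z) (k : ℕ) :
      D (z ^ k) = (k : A) * c * z ^ k := by
    cases k with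
    | zero => simp
    | succ k =>
      rw [D.leibniz_pow, hz, Nat.add_sub_cancel]
      simp only [smul_eq_mul, nsmul_eq_mul]
      ring
  rw [D.leibniz, map_pow_of_eq_mul hx, map_pow_of_eq_mul hy]
  simp only [smul_eq_mul]
  push_cast
  ring

/-- For `D₁₂ = D₁ ∘ D₂`,
`D₁₂^n(a) = (nr+1)!_r ((n−1)r+1)!_r a^{nr−(n−1)} b^n`. -/
theorem D12_iterate_a (r : ℕ) (hr : 1 ≤ r)
    (D₁ D₂ : Derivation ℝ (MvPolynomial (Fin 2) ℝ) (MvPolynomial (Fin 2) ℝ))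
    (h1a : D₁ (X 0) = X 0) (h1b : D₁ (X 1) = X 1)
    (h2a : D₂ (X 0) = X 0 ^ r * X 1) (h2b : D₂ (X 1) = X 0 ^ (r - 1) * X 1 ^ 2)
    (n : ℕ) :
    (⇑D₁ ∘ ⇑D₂)^[n] (X 0 : MvPolynomial (Fin 2) ℝ) =
      ((∏ j ∈ range (n + 1), (j * r + 1) : ℕ) : MvPolynomial (Fin 2) ℝ) *
        ((∏ j ∈ range n, (j * r + 1) : ℕ) : MvPolynomial (Fin 2) ℝ) *
        (X 0 ^ (n * (r - 1) + 1) * X 1 ^ n) := by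
  obtain ⟨s, rfl⟩ := Nat.exists_eq_add_of_le' hr
  simp only [Nat.add_sub_cancel] at *
  have map_natCast_mul (D : Derivation ℝ (MvPolynomial (Fin 2) ℝ) (MvPolynomial (Fin 2) ℝ))
      (m : ℕ) (f : MvPolynomial (Fin 2) ℝ) : D (m * f) = m * D f := by
    rw [← nsmul_eq_mul, map_nsmul, nsmul_eq_mul]
  have hD₁ := D₁.map_pow_mul_pow_of_eq_mul (c := 1) (h1a.trans (one_mul _).symm)
    (h1b.trans (one_mul _).symm)
  have hD₂ := D₂.map_pow_mul_pow_of_eq_mul (c := X 0 ^ s * X 1) (h2a.trans (by ring))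
    (h2b.trans (by ring))
  induction n with
  | zero => simp
  | succ n ih =>
    have shift (p q : ℕ) : (X 0 ^ s * X 1 * (X 0 ^ p * X 1 ^ q) : MvPolynomial (Fin 2) ℝ) =
        X 0 ^ (p + s) * X 1 ^ (q + 1) := by ring
    rw [Function.iterate_succ_apply', ih, Function.comp_apply, ← Nat.cast_mul, map_natCast_mul,
      hD₂, mul_assoc (Nat.cast _) (X 0 ^ s * X 1), shift, map_natCast_mul, map_natCast_mul, hD₁,
      prod_range_succ _ (n + 1), prod_range_succ _ n]
    push_cast
    ring
end

section
/- Fix an integer r ≥ 1. Let a = X₀ and b = X₁ be the indeterminates of ℝ[a,b], let D₁ be the ℝ-derivation with D₁(a) = a, D₁(b) = b, and let D₂ be the ℝ-derivation with D₂(a) = a^r b, D₂(b) = a^{r−1} b². Define D₂₁ = D₂ ∘ D₁ (first apply D₁, then D₂). Then for all n ≥ 0, D₂₁^n(a) = (∏_{j=0}^{n−1} (j·r + 1))² · a^{n(r−1)+1} · b^n. (In multifactorial notation, the coefficient is (((n−1)r+1)!_r)² and the exponent of a is nr−(n−1).) -/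
open MvPolynomial Finset

/-- A derivation acting on `a` and `b` as multiplication by `c` acts on `a ^ i * b ^ j` as
multiplication by `(i + j) * c`. -/
theorem Derivation.pow_mul_pow_of_eq_mul {R A : Type*} [CommSemiring R] [CommSemiring A]
    [Algebra R A] (D : Derivation R A A) {a b c : A} (ha : D a = a * c) (hb : D b = b * c)
    (i j : ℕ) : D (a ^ i * b ^ j) = ((i + j : ℕ) : A) * (a ^ i * b ^ j * c) := by
  have leibniz_pow_mul {x : A} (hx : D x = x * c) (k : ℕ) : D (x ^ k) = k * (x ^ k * c) := by
    induction k with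
    | zero => simp
    | succ k ih =>
      rw [pow_succ, D.leibniz, ih, hx, smul_eq_mul, smul_eq_mul]
      push_cast
      ring
  rw [D.leibniz, leibniz_pow_mul ha, leibniz_pow_mul hb, smul_eq_mul, smul_eq_mul]
  push_cast
  ring

/-- For `D₂₁ = D₂ ∘ D₁`,
`D₂₁^n(a) = (((n−1)r+1)!_r)² a^{nr−(n−1)} b^n`. -/
theorem D21_iterate_a (r : ℕ) (hr : 1 ≤ r)
    (D₁ D₂ : Derivation ℝ (MvPolynomial (Fin 2) ℝ) (MvPolynomial (Fin 2) ℝ))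
    (h1a : D₁ (X 0) = X 0) (h1b : D₁ (X 1) = X 1)
    (h2a : D₂ (X 0) = X 0 ^ r * X 1) (h2b : D₂ (X 1) = X 0 ^ (r - 1) * X 1 ^ 2)
    (n : ℕ) :
    (⇑D₂ ∘ ⇑D₁)^[n] (X 0 : MvPolynomial (Fin 2) ℝ) =
      (((∏ j ∈ range n, (j * r + 1)) ^ 2 : ℕ) : MvPolynomial (Fin 2) ℝ) *
        (X 0 ^ (n * (r - 1) + 1) * X 1 ^ n) := by
  obtain ⟨s, rfl⟩ := Nat.exists_eq_add_of_le' hr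
  simp only [Nat.add_sub_cancel] at h2b ⊢
  induction n with
  | zero => simp
  | succ n ih =>
    have nat_mul (D : Derivation ℝ (MvPolynomial (Fin 2) ℝ) (MvPolynomial (Fin 2) ℝ)) (k : ℕ)
        (p : MvPolynomial (Fin 2) ℝ) : D (k * p) = k * D p := by
      rw [← nsmul_eq_mul, map_nsmul, nsmul_eq_mul]
    rw [Function.iterate_succ_apply', ih, Function.comp_apply, nat_mul D₁,
      D₁.pow_mul_pow_of_eq_mul (c := 1) (by rw [h1a, mul_one]) (by rw [h1b, mul_one]), mul_one,
      nat_mul D₂, nat_mul D₂,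
      D₂.pow_mul_pow_of_eq_mul (c := X 0 ^ s * X 1) (by rw [h2a]; ring) (by rw [h2b]; ring),
      prod_range_succ]
    push_cast
    ring
end

section
/- Fix an integer r ≥ 1. Let a = X₀ and b = X₁ be the indeterminates of ℝ[a,b], let D₁ be the ℝ-derivation with D₁(a) = a, D₁(b) = b, and let D₂ be the ℝ-derivation with D₂(a) = a^r b, D₂(b) = a^{r−1} b². Define D₁₂ = D₁ ∘ D₂ (first apply D₂, then D₁). Then for all n ≥ 0, D₁₂^n(b) = (∏_{j=0}^{n} (j·r + 1)) · (∏_{j=0}^{n−1} (j·r + 1)) · a^{n(r−1)} · b^{n+1}. (In multifactorial notation, the coefficient is (nr+1)!_r · ((n−1)r+1)!_r and the exponent of a is nr−n.) -/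
open MvPolynomial Finset

/-- A derivation `D` scaling `x` by `c` scales `x ^ k` by `k * c`. -/
theorem Derivation.map_pow_of_map_eq_mul {R A : Type*} [CommSemiring R] [CommSemiring A]
    [Algebra R A] (D : Derivation R A A) {x c : A} (hx : D x = x * c) (k : ℕ) :
    D (x ^ k) = k * x ^ k * c := by
  induction k with
  | zero => simp
  | succ k ih =>
    rw [pow_succ, D.leibniz, ih, hx]
    simp only [smul_eq_mul]
    push_cast
    ring

/-- A derivation scaling both `x` and `y` by `c` scales `m * (x ^ p * y ^ q)`, with `m` a natural
number, by `(p + q) * c`. -/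
theorem Derivation.map_natCast_mul_pow_mul_pow {R A : Type*} [CommSemiring R] [CommSemiring A]
    [Algebra R A] (D : Derivation R A A) {x y c : A} (hx : D x = x * c) (hy : D y = y * c)
    (m p q : ℕ) :
    D (m * (x ^ p * y ^ q)) = ((m * (p + q) : ℕ) : A) * (x ^ p * y ^ q * c) := by
  rw [← nsmul_eq_mul, map_nsmul, D.leibniz, D.map_pow_of_map_eq_mul hx,
    D.map_pow_of_map_eq_mul hy, nsmul_eq_mul]
  simp only [smul_eq_mul]
  push_cast
  ring

/-- For `D₁₂ = D₁ ∘ D₂`,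
`D₁₂^n(b) = (nr+1)!_r ((n−1)r+1)!_r a^{nr−n} b^{n+1}`. -/
theorem D12_iterate_b (r : ℕ) (hr : 1 ≤ r)
    (D₁ D₂ : Derivation ℝ (MvPolynomial (Fin 2) ℝ) (MvPolynomial (Fin 2) ℝ))
    (h1a : D₁ (X 0) = X 0) (h1b : D₁ (X 1) = X 1)
    (h2a : D₂ (X 0) = X 0 ^ r * X 1) (h2b : D₂ (X 1) = X 0 ^ (r - 1) * X 1 ^ 2)
    (n : ℕ) :
    (⇑D₁ ∘ ⇑D₂)^[n] (X 1 : MvPolynomial (Fin 2) ℝ) =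
      ((∏ j ∈ range (n + 1), (j * r + 1) : ℕ) : MvPolynomial (Fin 2) ℝ) *
        ((∏ j ∈ range n, (j * r + 1) : ℕ) : MvPolynomial (Fin 2) ℝ) *
        (X 0 ^ (n * (r - 1)) * X 1 ^ (n + 1)) := by
  induction n with
  | zero => simp
  | succ n ih =>
    obtain ⟨s, rfl⟩ : ∃ s, r = s + 1 := ⟨r - 1, by omega⟩
    simp only [Nat.add_sub_cancel] at h2b ih ⊢
    have scale_two_a : D₂ (X 0) = X 0 * (X 0 ^ s * X 1) := by rw [h2a]; ring
    have scale_two_b : D₂ (X 1) = X 1 * (X 0 ^ s * X 1) := by rw [h2b]; ring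
    have exponents_add : (X 0 ^ (n * s) * X 1 ^ (n + 1) * (X 0 ^ s * X 1) :
        MvPolynomial (Fin 2) ℝ) = X 0 ^ ((n + 1) * s) * X 1 ^ (n + 1 + 1) := by ring
    rw [Function.iterate_succ_apply', ih, Function.comp_apply, ← Nat.cast_mul,
      D₂.map_natCast_mul_pow_mul_pow scale_two_a scale_two_b, exponents_add,
      D₁.map_natCast_mul_pow_mul_pow (h1a.trans (mul_one _).symm) (h1b.trans (mul_one _).symm),
      mul_one, ← Nat.cast_mul, prod_range_succ _ (n + 1), prod_range_succ _ n]
    congr 2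
    ring
end
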